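/- arXiv:1804.01357 — 2 statements merged into one kernel-verified Lean document; each statement's English description precedes it below -/
import Mathlib

section
/- For all real numbers u ≥ 0 and v > 0, the strict inequality Q(u+v) < e^{−2uv} · Q(u−v) holds. -/
/-- The standard Gaussian tail function `Q(x) = ∫_x^∞ (1/√(2π)) e^{-t²/2} dt`. -/
noncomputable def Q (x : ℝ) : ℝ :=
  ∫ t in Set.Ioi x, (1 / Real.sqrt (2 * Real.pi)) * Real.exp (-t ^ 2 / 2)

/-!
Translating the Gaussian density `φ` by `s` tilts it exponentially:
`φ (t + s) = exp (-(s * t + s ^ 2 / 2)) * φ t`. For `s > 0` the tilting factor is strictly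
decreasing in `t`, so on the half-line `t > x` it lies below its value at `x`. Integrating gives
`Q (x + s) < exp (-(s * x + s ^ 2 / 2)) * Q x`, and the theorem is the case `x = u - v`,
`s = 2 * v`.
-/

open MeasureTheory ProbabilityTheory Set
open scoped NNReal

theorem setIntegral_lt_setIntegral_of_forall_lt {α : Type*} [MeasurableSpace α] {μ : Measure α}
    {s : Set α} {f g : α → ℝ} (hs : MeasurableSet s) (hμs : μ s ≠ 0)
    (hf : IntegrableOn f s μ) (hg : IntegrableOn g s μ) (hfg : ∀ x ∈ s, f x < g x) :
    ∫ x in s, f x ∂μ < ∫ x in s, g x ∂μ := by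
  have hpos : ∀ x ∈ s, 0 < g x - f x := fun x hx => sub_pos.mpr (hfg x hx)
  rw [← sub_pos, ← integral_sub hg hf, setIntegral_pos_iff_support_of_nonneg_ae
    (ae_restrict_of_forall_mem hs fun x hx => (hpos x hx).le) (hg.sub hf)]
  exact (pos_iff_ne_zero.mpr hμs).trans_le
    (measure_mono fun x hx => ⟨(hpos x hx).ne', hx⟩)

theorem setIntegral_Ioi_comp_add_right {E : Type*} [NormedAddCommGroup E] [NormedSpace ℝ E]
    (f : ℝ → E) (a d : ℝ) : ∫ t in Ioi a, f (t + d) = ∫ t in Ioi (a + d), f t := by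
  have h := (measurePreserving_add_right volume d).setIntegral_preimage_emb
    (measurableEmbedding_addRight d) f (Ioi (a + d))
  rwa [preimage_add_const_Ioi, add_sub_cancel_right] at h

section GaussianTail

variable (μ : ℝ) (v : ℝ≥0)

theorem gaussianPDFReal_add_right (t s : ℝ) :
    gaussianPDFReal μ v (t + s) =
      Real.exp (-(s * (t - μ) + s ^ 2 / 2) / v) * gaussianPDFReal μ v t := by
  rw [gaussianPDFReal, gaussianPDFReal, mul_left_comm, ← Real.exp_add]
  congr 2
  ring

variable {v}

theorem gaussianPDFReal_add_right_lt (hv : v ≠ 0) {x t s : ℝ} (hs : 0 < s) (hxt : x < t) :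
    gaussianPDFReal μ v (t + s) <
      Real.exp (-(s * (x - μ) + s ^ 2 / 2) / v) * gaussianPDFReal μ v t := by
  have hpdf : 0 < gaussianPDFReal μ v t := gaussianPDFReal_pos μ v t hv
  rw [gaussianPDFReal_add_right]
  gcongr

theorem setIntegral_Ioi_add_gaussianPDFReal_lt (hv : v ≠ 0) (x : ℝ) {s : ℝ} (hs : 0 < s) :
    ∫ t in Ioi (x + s), gaussianPDFReal μ v t <
      Real.exp (-(s * (x - μ) + s ^ 2 / 2) / v) * ∫ t in Ioi x, gaussianPDFReal μ v t := by
  have hint : Integrable (gaussianPDFReal μ v) := integrable_gaussianPDFReal μ v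
  rw [← setIntegral_Ioi_comp_add_right, ← integral_const_mul]
  exact setIntegral_lt_setIntegral_of_forall_lt measurableSet_Ioi (by simp)
    (hint.comp_add_right s).integrableOn (hint.const_mul _).integrableOn
    fun t ht => gaussianPDFReal_add_right_lt μ hv hs ht

end GaussianTail

theorem Q_eq_setIntegral_gaussianPDFReal (x : ℝ) :
    Q x = ∫ t in Ioi x, gaussianPDFReal 0 1 t := by
  simp [Q, gaussianPDFReal]

theorem Q_add_lt (x : ℝ) {s : ℝ} (hs : 0 < s) :
    Q (x + s) < Real.exp (-(s * x + s ^ 2 / 2)) * Q x := by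
  simpa [Q_eq_setIntegral_gaussianPDFReal] using
    setIntegral_Ioi_add_gaussianPDFReal_lt 0 one_ne_zero x hs

theorem stmt_0_general (u v : ℝ) (hv : 0 < v) :
    Q (u + v) < Real.exp (-(2 * u * v)) * Q (u - v) := by
  have hshift : u + v = u - v + 2 * v := by ring
  have hexp : 2 * u * v = 2 * v * (u - v) + (2 * v) ^ 2 / 2 := by ring
  rw [hshift, hexp]
  exact Q_add_lt (u - v) (by positivity)

/-- For all `u ≥ 0` and `v > 0`, `Q(u+v) < e^{-2uv} · Q(u-v)`. -/
theorem stmt_0 (u v : ℝ) (hu : 0 ≤ u) (hv : 0 < v) :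
    Q (u + v) < Real.exp (-(2 * u * v)) * Q (u - v) :=
  stmt_0_general u v hv
end

section
/- Suppose σ > 0, P_0 > 0, P_1 > 0, π_0^t, π_0^r ∈ (0,1), the receiver costs satisfy C_{10}^r > C_{00}^r and C_{01}^r > C_{11}^r, and the transmitter costs satisfy C_{10}^t > C_{00}^t and C_{01}^t > C_{11}^t (i.e., ξ_0 > 0 and ξ_1 > 0). Let S_0* = −√P_0, S_1* = √P_1, τ = π_0^r(C_{10}^r − C_{00}^r)/(π_1^r(C_{01}^r − C_{11}^r)), and η* = (S_0* + S_1*)/2 + σ² ln(τ)/(S_1* − S_0*). Then the pair ((S_0*, S_1*), [η*, ∞)) is a Nash equilibrium of the binary Gaussian signaling game, and it is informative (S_0* ≠ S_1*). -/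
/-- Gaussian density with standard deviation `σ` (centered at 0). -/
noncomputable def gauss (σ y : ℝ) : ℝ :=
  (1 / (σ * Real.sqrt (2 * Real.pi))) * Real.exp (-y ^ 2 / (2 * σ ^ 2))

/-- Bayes risk of a player with prior `π₀` (and `π₁ = 1 - π₀`) and costs `Cⱼᵢ`
(cost of deciding `Hⱼ` when `Hᵢ` is true), when the signal levels are `S₀, S₁` and
the receiver decides `H₁` iff the observation lies in `Γ₁`. -/
noncomputable def bayesRisk (σ S0 S1 π0 C00 C01 C10 C11 : ℝ) (Γ1 : Set ℝ) : ℝ :=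
  π0 * (C00 * (∫ y in Γ1ᶜ, gauss σ (y - S0)) + C10 * (∫ y in Γ1, gauss σ (y - S0)))
    + (1 - π0) * (C01 * (∫ y in Γ1ᶜ, gauss σ (y - S1)) + C11 * (∫ y in Γ1, gauss σ (y - S1)))

/-!
Up to a constant, each risk is a positive multiple of the false-alarm probability `P(Γ₁ | H₀)`
minus a positive multiple of the detection probability `P(Γ₁ | H₁)`. When `Γ₁` is an upper ray, both
probabilities increase with the signal level, so the transmitter pushes `S₀` down and `S₁` up as far
as the power constraints allow. For fixed signals the risk is, up to the same constant, the integral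
over `Γ₁` of a weighted difference of the two densities, so the receiver does best by taking the set
where the integrand is nonpositive. For `S₀ < S₁` the Gaussian likelihood ratio increases with the
observation, and this set is a ray; solving for its endpoint gives `η*`.
-/

open MeasureTheory Set
open ProbabilityTheory (gaussianPDFReal integrable_gaussianPDFReal integral_gaussianPDFReal_eq_one)

theorem monotone_setIntegral_Ici_comp_sub {f : ℝ → ℝ} (hf : Integrable f) (hf_nonneg : 0 ≤ f)
    (η : ℝ) : Monotone fun S => ∫ y in Ici η, f (y - S) := by
  have translate (S : ℝ) : ∫ y in Ici η, f (y - S) = ∫ y in Ici (η - S), f y := by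
    have h := (measurePreserving_sub_right volume S).setIntegral_preimage_emb
      (measurableEmbedding_subRight S) f (Ici (η - S))
    rwa [preimage_sub_const_Ici, sub_add_cancel] at h
  intro S S' hS
  simp only [translate]
  exact setIntegral_mono_set hf.integrableOn (ae_of_all _ hf_nonneg)
    (Ici_subset_Ici.2 (sub_le_sub_left hS η)).eventuallyLE

section Gauss

variable {σ : ℝ}

theorem gauss_sub_eq_gaussianPDFReal (hσ : 0 ≤ σ) (S y : ℝ) :
    gauss σ (y - S) = gaussianPDFReal S (σ.toNNReal ^ 2) y := by
  rw [gauss, gaussianPDFReal, NNReal.coe_pow, Real.coe_toNNReal σ hσ,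
    Real.sqrt_mul (by positivity) (σ ^ 2), Real.sqrt_sq hσ, one_div, mul_comm σ]

theorem gauss_pos (hσ : 0 < σ) (y : ℝ) : 0 < gauss σ y := by
  unfold gauss
  positivity

theorem integrable_gauss_sub (hσ : 0 ≤ σ) (S : ℝ) : Integrable fun y => gauss σ (y - S) := by
  simpa only [gauss_sub_eq_gaussianPDFReal hσ] using integrable_gaussianPDFReal S _

theorem integral_gauss_sub (hσ : 0 < σ) (S : ℝ) : ∫ y, gauss σ (y - S) = 1 := by
  simp only [gauss_sub_eq_gaussianPDFReal hσ.le]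
  exact integral_gaussianPDFReal_eq_one S (pow_ne_zero 2 (Real.toNNReal_pos.2 hσ).ne')

theorem setIntegral_compl_gauss_sub (hσ : 0 < σ) (S : ℝ) {Γ : Set ℝ} (hΓ : MeasurableSet Γ) :
    ∫ y in Γᶜ, gauss σ (y - S) = 1 - ∫ y in Γ, gauss σ (y - S) := by
  rw [setIntegral_compl hΓ (integrable_gauss_sub hσ.le S), integral_gauss_sub hσ]

theorem monotone_setIntegral_Ici_gauss_sub (hσ : 0 < σ) (η : ℝ) :
    Monotone fun S => ∫ y in Ici η, gauss σ (y - S) :=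
  monotone_setIntegral_Ici_comp_sub (by simpa using integrable_gauss_sub hσ.le 0)
    (fun y => (gauss_pos hσ y).le) η

theorem gauss_sub_eq_gauss_sub_mul_exp (hσ : σ ≠ 0) (S0 S1 y : ℝ) :
    gauss σ (y - S1) =
      gauss σ (y - S0) * Real.exp ((y - (S0 + S1) / 2) * (S1 - S0) / σ ^ 2) := by
  rw [gauss, gauss, mul_assoc, ← Real.exp_add]
  congr 2
  field_simp
  ring

theorem mul_gauss_sub_le_mul_gauss_sub_iff (hσ : 0 < σ) {S0 S1 a b : ℝ} (hS : S0 < S1)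
    (ha : 0 < a) (hb : 0 < b) (y : ℝ) :
    a * gauss σ (y - S0) ≤ b * gauss σ (y - S1) ↔
      (S0 + S1) / 2 + σ ^ 2 * Real.log (a / b) / (S1 - S0) ≤ y := by
  have hd : 0 < S1 - S0 := sub_pos.2 hS
  set m := (S0 + S1) / 2
  calc a * gauss σ (y - S0) ≤ b * gauss σ (y - S1)
      ↔ a * gauss σ (y - S0) ≤
          Real.exp ((y - m) * (S1 - S0) / σ ^ 2) * b * gauss σ (y - S0) := by
        rw [gauss_sub_eq_gauss_sub_mul_exp hσ.ne' S0 S1, mul_comm (gauss _ _) (Real.exp _),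
          mul_left_comm, mul_assoc]
    _ ↔ a / b ≤ Real.exp ((y - m) * (S1 - S0) / σ ^ 2) := by
        rw [mul_le_mul_iff_of_pos_right (gauss_pos hσ _), div_le_iff₀ hb]
    _ ↔ σ ^ 2 * Real.log (a / b) ≤ (y - m) * (S1 - S0) := by
        rw [← Real.log_le_iff_le_exp (div_pos ha hb), le_div_iff₀' (by positivity)]
    _ ↔ m + σ ^ 2 * Real.log (a / b) / (S1 - S0) ≤ y := by
        rw [← div_le_iff₀ hd, le_sub_iff_add_le']

end Gauss

section BayesRisk

/-- The likelihood ratio test of a player: the observations for which deciding `H₁` has posterior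
cost at most that of deciding `H₀`. The densities are compared in cross-multiplied form, avoiding
the division in the usual test `φ(y - S₁) / φ(y - S₀) ≥ τ`. -/
def likelihoodRatioRegion (σ S0 S1 π0 C00 C01 C10 C11 : ℝ) : Set ℝ :=
  {y | π0 * (C10 - C00) * gauss σ (y - S0) ≤ (1 - π0) * (C01 - C11) * gauss σ (y - S1)}

variable {σ π0 C00 C01 C10 C11 : ℝ}

theorem bayesRisk_eq (hσ : 0 < σ) (S0 S1 : ℝ) {Γ : Set ℝ} (hΓ : MeasurableSet Γ) :
    bayesRisk σ S0 S1 π0 C00 C01 C10 C11 Γ =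
      π0 * C00 + (1 - π0) * C01 + (π0 * (C10 - C00) * (∫ y in Γ, gauss σ (y - S0))
        - (1 - π0) * (C01 - C11) * ∫ y in Γ, gauss σ (y - S1)) := by
  rw [bayesRisk, setIntegral_compl_gauss_sub hσ S0 hΓ, setIntegral_compl_gauss_sub hσ S1 hΓ]
  ring

theorem bayesRisk_Ici_le_of_le (hσ : 0 < σ) (hπ : π0 ∈ Icc 0 1) (h10 : C00 ≤ C10)
    (h01 : C11 ≤ C01) {S0 S0' S1 S1' : ℝ} (hS0 : S0 ≤ S0') (hS1 : S1' ≤ S1) (η : ℝ) :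
    bayesRisk σ S0 S1 π0 C00 C01 C10 C11 (Ici η) ≤
      bayesRisk σ S0' S1' π0 C00 C01 C10 C11 (Ici η) := by
  have falseAlarm_coeff : 0 ≤ π0 * (C10 - C00) := mul_nonneg hπ.1 (sub_nonneg.2 h10)
  have detection_coeff : 0 ≤ (1 - π0) * (C01 - C11) :=
    mul_nonneg (sub_nonneg.2 hπ.2) (sub_nonneg.2 h01)
  rw [bayesRisk_eq hσ S0 S1 measurableSet_Ici, bayesRisk_eq hσ S0' S1' measurableSet_Ici]
  gcongr _ + (_ * ?_ - _ * ?_)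
  · exact monotone_setIntegral_Ici_gauss_sub hσ η hS0
  · exact monotone_setIntegral_Ici_gauss_sub hσ η hS1

theorem bayesRisk_likelihoodRatioRegion_le (hσ : 0 < σ) (S0 S1 : ℝ) {Γ : Set ℝ}
    (hΓ : MeasurableSet Γ) :
    bayesRisk σ S0 S1 π0 C00 C01 C10 C11 (likelihoodRatioRegion σ S0 S1 π0 C00 C01 C10 C11) ≤
      bayesRisk σ S0 S1 π0 C00 C01 C10 C11 Γ := by
  set excess : ℝ → ℝ := fun y =>
    π0 * (C10 - C00) * gauss σ (y - S0) - (1 - π0) * (C01 - C11) * gauss σ (y - S1)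
  have excess_measurable : Measurable excess := by
    unfold excess gauss
    fun_prop
  have integrable₀ := (integrable_gauss_sub hσ.le S0).const_mul (π0 * (C10 - C00))
  have integrable₁ := (integrable_gauss_sub hσ.le S1).const_mul ((1 - π0) * (C01 - C11))
  have region_eq : likelihoodRatioRegion σ S0 S1 π0 C00 C01 C10 C11 = {y | excess y ≤ 0} := by
    simp only [likelihoodRatioRegion, excess, sub_nonpos]
  have risk_eq {A : Set ℝ} (hA : MeasurableSet A) : bayesRisk σ S0 S1 π0 C00 C01 C10 C11 A =
      π0 * C00 + (1 - π0) * C01 + ∫ y in A, excess y := by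
    rw [bayesRisk_eq hσ S0 S1 hA, integral_sub integrable₀.integrableOn integrable₁.integrableOn,
      integral_const_mul, integral_const_mul]
  rw [region_eq, risk_eq (measurableSet_le excess_measurable measurable_const), risk_eq hΓ]
  exact add_le_add_right (setIntegral_nonpos_le hΓ excess_measurable.stronglyMeasurable
    (integrable₀.sub integrable₁)) _

theorem likelihoodRatioRegion_eq_Ici (hσ : 0 < σ) {S0 S1 : ℝ} (hS : S0 < S1)
    (hπ : π0 ∈ Ioo 0 1) (h10 : C00 < C10) (h01 : C11 < C01) :
    likelihoodRatioRegion σ S0 S1 π0 C00 C01 C10 C11 =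
      Ici ((S0 + S1) / 2 +
        σ ^ 2 * Real.log (π0 * (C10 - C00) / ((1 - π0) * (C01 - C11))) / (S1 - S0)) :=
  Set.ext <| mul_gauss_sub_le_mul_gauss_sub_iff hσ hS (mul_pos hπ.1 (sub_pos.2 h10))
    (mul_pos (sub_pos.2 hπ.2) (sub_pos.2 h01))

end BayesRisk

/-- When `ξ₀ > 0` and `ξ₁ > 0` (transmitter and receiver cost differences have the
same signs: `C₁₀ > C₀₀` and `C₀₁ > C₁₁` for both players), the pair
`((-√P₀, √P₁), [η*, ∞))` with `η* = (S₀*+S₁*)/2 + σ² ln τ/(S₁*-S₀*)`,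
`τ = π₀ʳ(C₁₀ʳ-C₀₀ʳ)/(π₁ʳ(C₀₁ʳ-C₁₁ʳ))`, is an informative Nash equilibrium of the
binary Gaussian signaling game. -/
theorem stmt_14 (σ P0 P1 π0t π0r C00t C01t C10t C11t C00r C01r C10r C11r : ℝ)
    (hσ : 0 < σ) (hP0 : 0 < P0) (hP1 : 0 < P1)
    (hπt : π0t ∈ Set.Ioo (0 : ℝ) 1) (hπr : π0r ∈ Set.Ioo (0 : ℝ) 1)
    (hr10 : C10r > C00r) (hr01 : C01r > C11r)
    (ht10 : C10t > C00t) (ht01 : C01t > C11t)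
    (S0s S1s τ ηs : ℝ)
    (hS0s : S0s = -Real.sqrt P0) (hS1s : S1s = Real.sqrt P1)
    (hτ : τ = π0r * (C10r - C00r) / ((1 - π0r) * (C01r - C11r)))
    (hηs : ηs = (S0s + S1s) / 2 + σ ^ 2 * Real.log τ / (S1s - S0s)) :
    (∀ S0 S1 : ℝ, S0 ^ 2 ≤ P0 → S1 ^ 2 ≤ P1 →
        bayesRisk σ S0s S1s π0t C00t C01t C10t C11t (Set.Ici ηs)
          ≤ bayesRisk σ S0 S1 π0t C00t C01t C10t C11t (Set.Ici ηs))
      ∧ (∀ Γ1 : Set ℝ, MeasurableSet Γ1 →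
          bayesRisk σ S0s S1s π0r C00r C01r C10r C11r (Set.Ici ηs)
            ≤ bayesRisk σ S0s S1s π0r C00r C01r C10r C11r Γ1)
      ∧ S0s ≠ S1s := by
  have signals_lt : S0s < S1s := by
    rw [hS0s, hS1s]
    exact (neg_neg_of_pos (Real.sqrt_pos.2 hP0)).trans (Real.sqrt_pos.2 hP1)
  refine ⟨fun S0 S1 hS0 hS1 => ?transmitter, fun Γ1 hΓ1 => ?receiver, signals_lt.ne⟩
  case transmitter =>
    exact bayesRisk_Ici_le_of_le hσ (Ioo_subset_Icc_self hπt) ht10.le ht01.le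
      (hS0s ▸ Real.neg_sqrt_le_of_sq_le hS0) (hS1s ▸ Real.le_sqrt_of_sq_le hS1) ηs
  case receiver =>
    rw [hηs, hτ, ← likelihoodRatioRegion_eq_Ici hσ signals_lt hπr hr10 hr01]
    exact bayesRisk_likelihoodRatioRegion_le hσ S0s S1s hΓ1
end
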